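/- Let K₁ and K₂ be compact subsets of ℂ such that K₁ ∩ K₂ contains at most one point. If ℂ ∖ K₁ and ℂ ∖ K₂ are both connected, then ℂ ∖ (K₁ ∪ K₂) is connected. -/

import Mathlib

open Set Metric Bornology Filter

/-- A *hole* of `E` is a nonempty bounded connected component of `ℂ \ E`. -/
def IsHole (E C : Set ℂ) : Prop :=
  (∃ z ∈ Eᶜ, C = connectedComponentIn Eᶜ z) ∧ Bornology.IsBounded C

/-- A compact set `K` contained in an open set `Ω` is `Ω`-*convex* if every hole of `K`
contains a point of `ℂ \ Ω`. -/
def OmegaConvex (Ω K : Set ℂ) : Prop :=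
  ∀ C : Set ℂ, IsHole K C → (C ∩ Ωᶜ).Nonempty

/-- The *polynomial hull* of `K`: the union of `K` and all of its holes. -/
def polyHull (K : Set ℂ) : Set ℂ :=
  K ∪ {z | z ∈ Kᶜ ∧ Bornology.IsBounded (connectedComponentIn Kᶜ z)}

/-- A sequence of maps is *eventually injective* on `G`: for every compact `K ⊆ G`, the maps
are eventually injective on a neighbourhood of `K` in `G`. -/
def EventuallyInjective (G : Set ℂ) (φ : ℕ → ℂ → ℂ) : Prop :=
  ∀ K : Set ℂ, K ⊆ G → IsCompact K →
    ∃ N : ℕ, ∀ n ≥ N, ∃ U : Set ℂ, IsOpen U ∧ K ⊆ U ∧ U ⊆ G ∧ Set.InjOn (φ n) U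

/-- `f` is `(Φ, G, Ω)`-*universal*: the family `{f ∘ φ n : n ∈ ℕ}` is dense in `H(G)` for the
topology of locally uniform convergence, i.e. every `g` holomorphic on `G` can be approximated
uniformly on every compact subset of `G` by functions `f ∘ φ n`. -/
def UniversalFor (G : Set ℂ) (φ : ℕ → ℂ → ℂ) (f : ℂ → ℂ) : Prop :=
  ∀ g : ℂ → ℂ, DifferentiableOn ℂ g G →
    ∀ K : Set ℂ, K ⊆ G → IsCompact K → ∀ ε : ℝ, 0 < ε →
      ∃ n : ℕ, ∀ z ∈ K, ‖f (φ n z) - g z‖ < ε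

/-- `E` has no hole (for a domain: simple connectivity). -/
def HasNoHole (E : Set ℂ) : Prop := ¬ ∃ C : Set ℂ, IsHole E C

/-- A *Jordan curve*: the image of the unit circle under an injective continuous map. -/
def IsJordanCurve (C : Set ℂ) : Prop :=
  ∃ γ : ℂ → ℂ, ContinuousOn γ (Metric.sphere 0 1) ∧ Set.InjOn γ (Metric.sphere 0 1) ∧
    C = γ '' Metric.sphere 0 1

/-- A *Jordan arc*: the image of `[0,1]` under an injective continuous map. -/
def IsJordanArc (C : Set ℂ) : Prop :=
  ∃ γ : ℝ → ℂ, ContinuousOn γ (Set.Icc 0 1) ∧ Set.InjOn γ (Set.Icc 0 1) ∧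
    C = γ '' Set.Icc 0 1

/-- A compact set is *regular* if its boundary is a union of Jordan curves. -/
def RegularCompact (K : Set ℂ) : Prop :=
  ∃ 𝒞 : Set (Set ℂ), (∀ C ∈ 𝒞, IsJordanCurve C) ∧ frontier K = ⋃₀ 𝒞

/-- `K` is `Ω`-*connected*: it has no hole if `Ω` is simply connected, and has at least one hole
if `Ω` is not simply connected. -/
def OmegaConnectedSet (Ω K : Set ℂ) : Prop :=
  (HasNoHole Ω → HasNoHole K) ∧ (¬ HasNoHole Ω → ∃ C : Set ℂ, IsHole K C)

/-- Membership in the family `M(Ω)` of nonempty compact subsets of `Ω` that are regular,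
connected, `Ω`-connected and `Ω`-convex. -/
def MemM (Ω K : Set ℂ) : Prop :=
  K.Nonempty ∧ IsCompact K ∧ K ⊆ Ω ∧ RegularCompact K ∧ IsConnected K ∧
    OmegaConnectedSet Ω K ∧ OmegaConvex Ω K

/-- `f` is `(Φ, M)`-*universal*: for every `K ∈ M`, the restrictions of the `f ∘ φ n` to `K`
are dense in `C(K)`. -/
def MUniversal (M : Set (Set ℂ)) (φ : ℕ → ℂ → ℂ) (f : ℂ → ℂ) : Prop :=
  ∀ K ∈ M, ∀ h : ℂ → ℂ, ContinuousOn h K → ∀ ε : ℝ, 0 < ε →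
    ∃ n : ℕ, ∀ z ∈ K, ‖f (φ n z) - h z‖ < ε

def HasLogOn (K : Set ℂ) (a : ℂ) : Prop :=
  ∃ g : ℂ → ℂ, ContinuousOn g K ∧ ∀ z ∈ K, Complex.exp (g z) = z - a

lemma one_sub_ne_and_cont {K : Set ℂ} {w : ℂ → ℂ} (hw : ContinuousOn w K)
    (h : ∀ z ∈ K, ‖w z‖ < 1) :
    ContinuousOn (fun z => Complex.log (1 - w z)) K ∧
      ∀ z ∈ K, Complex.exp (Complex.log (1 - w z)) = 1 - w z := by
  have hs : ∀ z ∈ K, 1 - w z ∈ Complex.slitPlane := by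
    intro z hz
    left
    have := (Complex.abs_re_le_norm (w z)).trans_lt (h z hz)
    have := (abs_lt.1 this).2
    simp; linarith
  refine ⟨(continuousOn_const.sub hw).clog hs, fun z hz => ?_⟩
  exact Complex.exp_log (Complex.slitPlane_ne_zero (hs z hz))

lemma HasLogOn.near {K : Set ℂ} {a b : ℂ} (h : HasLogOn K a)
    (hab : ∀ z ∈ K, ‖b - a‖ < ‖z - a‖) : HasLogOn K b := by
  obtain ⟨g, hg, hg'⟩ := h
  have hne : ∀ z ∈ K, z - a ≠ 0 := fun z hz => by
    have := (norm_nonneg _).trans_lt (hab z hz)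
    exact norm_pos_iff.1 this
  obtain ⟨h1, h2⟩ := one_sub_ne_and_cont (K := K) (w := fun z => (b - a) / (z - a))
    (continuousOn_const.div (by fun_prop) hne) (fun z hz => by
      rw [norm_div, div_lt_one (norm_pos_iff.2 (hne z hz))]; exact hab z hz)
  refine ⟨_, hg.add h1, fun z hz => ?_⟩
  rw [Pi.add_apply, Complex.exp_add]
  rw [hg' z hz, h2 z hz]
  have := hne z hz
  field_simp
  ring

lemma hasLogOn_far {K : Set ℂ} {a : ℂ} (h : ∀ z ∈ K, ‖z‖ < ‖a‖) : HasLogOn K a := by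
  by_cases ha : a = 0
  · subst ha
    refine ⟨0, continuousOn_const, fun z hz => ?_⟩
    have := h z hz
    rw [norm_zero] at this
    exact absurd this (not_lt.2 (norm_nonneg _))
  obtain ⟨h1, h2⟩ := one_sub_ne_and_cont (K := K) (w := fun z => z / a)
    (by fun_prop) (fun z hz => by
      rw [norm_div, div_lt_one (norm_pos_iff.2 ha)]; exact h z hz)
  refine ⟨_, (continuousOn_const (c := Complex.log (-a))).add h1, fun z hz => ?_⟩
  rw [Pi.add_apply, Complex.exp_add]
  rw [Complex.exp_log (neg_ne_zero.2 ha), h2 z hz]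
  field_simp
  ring

lemma hasLogOn_of_connected {K : Set ℂ} (hK : IsCompact K) (hc : IsConnected Kᶜ) {a : ℂ}
    (ha : a ∉ K) : HasLogOn K a := by
  have key : Kᶜ ⊆ {a | a ∈ Kᶜ ∧ HasLogOn K a} := by
    have hball : ∀ c ∈ Kᶜ, ∃ δ > 0, ball c δ ⊆ Kᶜ := fun c hc' =>
      Metric.isOpen_iff.1 hK.isClosed.isOpen_compl c hc'
    have hfar : ∀ c δ, ball c δ ⊆ Kᶜ → ∀ z ∈ K, δ ≤ ‖z - c‖ := by
      intro c δ h z hz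
      by_contra! hlt
      exact h (mem_ball_iff_norm.2 hlt) hz
    refine hc.isPreconnected.subset_of_closure_inter_subset ?_ ?_ ?_
    · rw [Metric.isOpen_iff]
      rintro a ⟨haK, hal⟩
      obtain ⟨δ, hδ, hb⟩ := hball a haK
      refine ⟨δ, hδ, fun b hbb => ⟨hb hbb, hal.near fun z hz => ?_⟩⟩
      exact (mem_ball_iff_norm.1 hbb).trans_le (hfar a δ hb z hz)
    · obtain ⟨R, hR⟩ := hK.isBounded.exists_norm_le
      have hb : ∀ z ∈ K, ‖z‖ < ‖((|R| + 1 : ℝ) : ℂ)‖ := fun z hz => by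
        rw [Complex.norm_real, Real.norm_of_nonneg (by positivity)]
        have := hR z hz
        have := le_abs_self R
        linarith
      have hb' : ((|R| + 1 : ℝ) : ℂ) ∈ Kᶜ := fun hz => (hb _ hz).ne rfl
      exact ⟨_, hb', hb', hasLogOn_far hb⟩
    · rintro c ⟨hcc, hcK⟩
      obtain ⟨δ, hδ, hb⟩ := hball c hcK
      obtain ⟨a, ⟨haK, hal⟩, hd⟩ := Metric.mem_closure_iff.1 hcc (δ / 2) (by linarith)
      refine ⟨hcK, hal.near fun z hz => ?_⟩
      have h1 := hfar c δ hb z hz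
      rw [dist_eq_norm] at hd
      have h2 : ‖z - c‖ ≤ ‖z - a‖ + ‖c - a‖ := by
        have := norm_sub_le (z - a) (c - a)
        simpa using this
      linarith
  exact (key ha).2

lemma HasLogOn.union {K₁ K₂ : Set ℂ} (h₁ : IsClosed K₁) (h₂ : IsClosed K₂)
    (hint : (K₁ ∩ K₂).Subsingleton) {a : ℂ} (l₁ : HasLogOn K₁ a) (l₂ : HasLogOn K₂ a) :
    HasLogOn (K₁ ∪ K₂) a := by
  classical
  obtain ⟨g₁, c₁, e₁⟩ := l₁
  obtain ⟨g₂, c₂, e₂⟩ := l₂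
  have : ∃ c : ℂ, Complex.exp c = 1 ∧ ∀ p ∈ K₁ ∩ K₂, g₁ p = g₂ p + c := by
    rcases hint.eq_empty_or_singleton with h | ⟨p, h⟩
    · exact ⟨0, by simp, by simp [h]⟩
    · have hp : p ∈ K₁ ∩ K₂ := by simp [h]
      refine ⟨g₁ p - g₂ p, ?_, ?_⟩
      · rw [Complex.exp_sub, e₁ p hp.1, e₂ p hp.2, div_self]
        rw [← e₁ p hp.1]; exact Complex.exp_ne_zero _
      · intro q hq
        obtain rfl : q = p := hint hq hp
        ring
  obtain ⟨c, hc, hp⟩ := this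
  let g : ℂ → ℂ := fun z => if z ∈ K₁ then g₁ z else g₂ z + c
  have E₁ : EqOn g g₁ K₁ := fun z hz => by simp [g, hz]
  have E₂ : EqOn g (fun z => g₂ z + c) K₂ := fun z hz => by
    by_cases h : z ∈ K₁
    · simp [g, h, hp z ⟨h, hz⟩]
    · simp [g, h]
  refine ⟨g, ContinuousOn.union_of_isClosed (c₁.congr E₁)
    ((c₂.add continuousOn_const).congr E₂) h₁ h₂, ?_⟩
  rintro z (hz | hz)
  · rw [E₁ hz, e₁ z hz]
  · rw [E₂ hz]; simp only [Complex.exp_add]; rw [hc, mul_one, e₂ z hz]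

lemma no_global {F : ℂ → ℂ} (hF : Continuous F) (h0 : ∀ z, F z ≠ 0) {R : ℝ} {a : ℂ}
    (ha : ‖a‖ < R) (h : ∀ z, R ≤ ‖z‖ → F z = z - a) : False := by
  obtain ⟨L, ⟨-, hL⟩, -⟩ := Complex.isCoveringMapOn_exp.existsUnique_continuousMap_lifts
    (⟨F, hF⟩ : C(ℂ, ℂ)) (a₀ := 0) (e₀ := Complex.log (F 0)) (Complex.exp_log (h0 0)) (fun z => h0 z)
  have hL' : ∀ z, Complex.exp (L z) = F z := fun z => congrFun hL z
  have hRpos : 0 < R := (norm_nonneg a).trans_lt ha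
  have hint : (∮ z in C(0, R + 1), (z - a)⁻¹) = 0 := by
    refine circleIntegral.integral_eq_zero_of_hasDerivWithinAt (f := L) (by linarith) ?_
    intro z hz
    rw [mem_sphere_zero_iff_norm] at hz
    have hza : Complex.exp (L z) = z - a := by rw [hL', h z (by linarith)]
    have hev : ∀ᶠ y in nhds z, Complex.exp (L y) + a = y := by
      have : ∀ᶠ y : ℂ in nhds z, R < ‖y‖ :=
        continuous_norm.continuousAt.eventually_const_lt (by linarith)
      filter_upwards [this] with y hy
      rw [hL', h y hy.le]; ring
    have hd := HasDerivAt.of_local_left_inverse (f := fun w => Complex.exp w + a) (g := L)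
      (f' := Complex.exp (L z)) L.continuous.continuousAt
      ((Complex.hasDerivAt_exp _).add_const a) (Complex.exp_ne_zero _) hev
    rw [hza] at hd
    exact hd.hasDerivWithinAt
  rw [circleIntegral.integral_sub_inv_of_mem_ball (by simp; linarith)] at hint
  simp [Real.pi_ne_zero] at hint

lemma no_log {K U : Set ℂ} (hK : IsClosed K) (hU : IsOpen U) (hf : frontier U ⊆ K) {R : ℝ}
    (hb : ∀ z ∈ U, ‖z‖ < R) {a : ℂ} (ha : a ∈ U) (hl : HasLogOn K a) : False := by
  classical
  obtain ⟨g, hg, hg'⟩ := hl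
  obtain ⟨G, hG⟩ := ContinuousMap.exists_restrict_eq hK
    (⟨K.restrict g, continuousOn_iff_continuous_restrict.1 hg⟩ : C(K, ℂ))
  have hGg : ∀ z ∈ K, G z = g z := fun z hz => congrArg (fun f : C(K, ℂ) => f ⟨z, hz⟩) hG
  have hc : Continuous (U.piecewise (fun z => Complex.exp (G z)) (fun z => z - a)) := by
    refine Continuous.piecewise ?_ (by fun_prop) (by fun_prop)
    intro z hz
    rw [hGg z (hf hz), hg' z (hf hz)]
  refine no_global hc ?_ (hb a ha) ?_
  · intro z
    by_cases hz : z ∈ U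
    · simp [hz]
    · simp only [hz, Set.piecewise_eq_of_notMem, not_false_eq_true]
      intro h
      exact hz (by rwa [sub_eq_zero.1 h])
  · intro z hz
    have : z ∉ U := fun h => (hb z h).not_ge hz
    simp [this]

lemma isPreconnected_outside (R : ℝ) (hR : 0 ≤ R) : IsPreconnected {z : ℂ | R ≤ ‖z‖} := by
  have h1 : IsPreconnected (sphere (0 : ℂ) 1) := isPreconnected_sphere (by simp) 0 1
  have h2 := (h1.prod (isPreconnected_Ici (a := R))).image (fun p : ℂ × ℝ => (p.2 : ℂ) * p.1)
    (by fun_prop)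
  convert h2 using 1
  ext z
  simp only [mem_setOf_eq, mem_image, mem_prod, mem_sphere_zero_iff_norm, mem_Ici, Prod.exists]
  constructor
  · intro hz
    by_cases h : z = 0
    · subst h
      exact ⟨1, 0, ⟨by simp, by simpa using hz⟩, by simp⟩
    · have : (‖z‖ : ℂ) ≠ 0 := by simpa using h
      refine ⟨z / ‖z‖, ‖z‖, ⟨?_, hz⟩, ?_⟩
      · simp [h]
      · field_simp
  · rintro ⟨x, r, ⟨hx, hr⟩, rfl⟩
    rw [norm_mul, hx, mul_one, Complex.norm_real]
    exact hr.trans (le_abs_self r)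

lemma isConnected_compl_of_log {K : Set ℂ} (hK : IsCompact K)
    (hl : ∀ a ∉ K, HasLogOn K a) : IsConnected Kᶜ := by
  obtain ⟨R₀, hR₀⟩ := hK.isBounded.exists_norm_le
  obtain ⟨R, hR0, hR⟩ : ∃ R : ℝ, 0 ≤ R ∧ ∀ z ∈ K, ‖z‖ < R :=
    ⟨|R₀| + 1, by positivity, fun z hz => by
      have := hR₀ z hz
      have := le_abs_self R₀
      linarith⟩
  set S : Set ℂ := {z : ℂ | R ≤ ‖z‖} with hS
  have hSK : S ⊆ Kᶜ := fun z hz hzK => (hR z hzK).not_ge hz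
  have hSne : ((R : ℂ)) ∈ S := by
    simp only [hS, mem_setOf_eq, Complex.norm_real]; exact le_abs_self R
  refine ⟨⟨_, hSK hSne⟩, ?_⟩
  have main : ∀ u v : Set ℂ, IsOpen u → IsOpen v → Kᶜ ⊆ u ∪ v → (Kᶜ ∩ u).Nonempty →
      ¬ (Kᶜ ∩ (u ∩ v)).Nonempty → S ⊆ v → False := by
    rintro u v hu hv huv ⟨a, haK, hau⟩ hne hSv
    refine no_log (U := Kᶜ ∩ u) hK.isClosed (hK.isClosed.isOpen_compl.inter hu) ?_ (R := R) ?_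
      ⟨haK, hau⟩ (hl a haK)
    · intro z hz
      by_contra hzK
      rw [(hK.isClosed.isOpen_compl.inter hu).frontier_eq] at hz
      have hzv : z ∈ v := (huv hzK).resolve_left fun h => hz.2 ⟨hzK, h⟩
      obtain ⟨y, hyv, hyK, hyu⟩ := mem_closure_iff.1 hz.1 v hv hzv
      exact hne ⟨y, hyK, hyu, hyv⟩
    · rintro z ⟨hzK, hzu⟩
      by_contra! h
      exact hne ⟨z, hzK, hzu, hSv h⟩
  intro u v hu hv huv hune hvne
  by_contra hne
  have hdis : S ∩ (u ∩ v) = ∅ := by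
    rw [← not_nonempty_iff_eq_empty]
    rintro ⟨z, hz, hz'⟩
    exact hne ⟨z, hSK hz, hz'⟩
  rcases (isPreconnected_iff_subset_of_disjoint.1 (isPreconnected_outside R hR0)) u v hu hv
    (hSK.trans huv) hdis with h | h
  · exact main v u hv hu (by rwa [union_comm]) hvne (by rwa [inter_comm v u]) h
  · exact main u v hu hv huv hune hne h

/-- Lemma `geo-lemma2`. -/
theorem isConnected_compl_union_of_inter_subsingleton
    (K₁ K₂ : Set ℂ) (h₁ : IsCompact K₁) (h₂ : IsCompact K₂)
    (hint : (K₁ ∩ K₂).Subsingleton)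
    (hc₁ : IsConnected K₁ᶜ) (hc₂ : IsConnected K₂ᶜ) :
    IsConnected (K₁ ∪ K₂)ᶜ := by
  exact isConnected_compl_of_log (h₁.union h₂) fun a ha =>
    HasLogOn.union h₁.isClosed h₂.isClosed hint
      (hasLogOn_of_connected h₁ hc₁ fun h => ha (Or.inl h))
      (hasLogOn_of_connected h₂ hc₂ fun h => ha (Or.inr h))
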